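/- Every polynomial is a (p,q)-Bézier curve: let n ≥ 1, let p, q be reals with 0 < q < p, let S be a real polynomial of degree at most n, and let s : ℝ^n → ℝ be the (p,q)-blossom of S. For k = 0, …, n set P_k = s(0, …, 0, p^{n−1}, p^{n−2}q, …, p^{n−k}q^{k−1}), where the first n−k arguments are 0 and the remaining k arguments are p^{n−1}, p^{n−2}q, …, p^{n−k}q^{k−1}. Then S(t) = Σ_{k=0}^{n} P_k B_k^n(t;p,q) for all real t. -/

import Mathlib

/-- The (p,q)-integer `[n]_{p,q} = Σ_{j=0}^{n-1} p^{n-1-j} q^j`. -/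
noncomputable def pqInt (p q : ℝ) (n : ℕ) : ℝ :=
  ∑ j ∈ Finset.range n, p ^ (n - 1 - j) * q ^ j

/-- The (p,q)-factorial `[n]_{p,q}! = ∏_{j=1}^{n} [j]_{p,q}`. -/
noncomputable def pqFact (p q : ℝ) : ℕ → ℝ
  | 0 => 1
  | n + 1 => pqFact p q n * pqInt p q (n + 1)

/-- The (p,q)-binomial coefficient `[n choose k]_{p,q}`. -/
noncomputable def pqBinom (p q : ℝ) (n k : ℕ) : ℝ :=
  pqFact p q n / (pqFact p q k * pqFact p q (n - k))

/-- The (p,q)-Bernstein basis function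
`B_k^n(t;p,q) = p^{k(k-1)/2 - n(n-1)/2} [n choose k]_{p,q} t^k ∏_{s=0}^{n-k-1} (p^s - q^s t)`. -/
noncomputable def pqBernstein (p q : ℝ) (n k : ℕ) (t : ℝ) : ℝ :=
  p ^ (k * (k - 1) / 2) / p ^ (n * (n - 1) / 2) * pqBinom p q n k * t ^ k *
    ∏ s ∈ Finset.range (n - k), (p ^ s - q ^ s * t)

/-- The `k`-th elementary symmetric polynomial in `n` variables:
`φ_{n,k}(u_1, …, u_n) = Σ_{1 ≤ i_1 < … < i_k ≤ n} u_{i_1} ⋯ u_{i_k}`. -/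
noncomputable def esymmEval (n k : ℕ) (u : Fin n → ℝ) : ℝ :=
  ∑ S ∈ Finset.powersetCard k (Finset.univ : Finset (Fin n)), ∏ i ∈ S, u i

/-- A function `f : ℝ^n → ℝ` is symmetric if it is invariant under all permutations
of its arguments. -/
def IsSymmetricFn (n : ℕ) (f : (Fin n → ℝ) → ℝ) : Prop :=
  ∀ (σ : Equiv.Perm (Fin n)) (u : Fin n → ℝ), f (fun i => u (σ i)) = f u

/-- A function `f : ℝ^n → ℝ` is multiaffine if, fixing all variables except the `j`-th,
the resulting one-variable function is affine (degree at most one). -/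
def IsMultiaffine (n : ℕ) (f : (Fin n → ℝ) → ℝ) : Prop :=
  ∀ (j : Fin n) (u : Fin n → ℝ), ∃ a b : ℝ,
    ∀ x : ℝ, f (Function.update u j x) = a * x + b

lemma pqInt_add (p q : ℝ) (a b : ℕ) :
    pqInt p q (b + a) = p ^ a * pqInt p q b + q ^ b * pqInt p q a := by
  unfold pqInt
  rw [Finset.sum_range_add, Finset.mul_sum, Finset.mul_sum]
  congr 1
  · apply Finset.sum_congr rfl
    intro j hj
    have hj := Finset.mem_range.1 hj
    have : b + a - 1 - j = a + (b - 1 - j) := by omega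
    rw [this, pow_add]; ring
  · apply Finset.sum_congr rfl
    intro j hj
    have : b + a - 1 - (b + j) = a - 1 - j := by omega
    rw [this, pow_add]; ring

lemma pqInt_pos (p q : ℝ) (hp : 0 < p) (hq : 0 < q) (n : ℕ) : 0 < pqInt p q (n + 1) := by
  unfold pqInt
  apply Finset.sum_pos
  · intro i _; positivity
  · simp

lemma pqFact_pos (p q : ℝ) (hp : 0 < p) (hq : 0 < q) (n : ℕ) : 0 < pqFact p q n := by
  induction n with
  | zero => simp [pqFact]
  | succ n ih => exact mul_pos ih (pqInt_pos p q hp hq n)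

/-- Recursive (de Casteljau) weights. -/
noncomputable def casW (r t : ℝ) : ℕ → ℕ → ℝ
  | 0, 0 => 1
  | 0, _ + 1 => 0
  | m + 1, 0 => casW r t m 0 * (1 - r ^ m * t)
  | m + 1, k + 1 => casW r t m (k + 1) * (1 - r ^ (m - (k + 1)) * t)
      + casW r t m k * (r ^ (m - k) * t)

lemma casW_zero (r t : ℝ) (m k : ℕ) (h : m < k) : casW r t m k = 0 := by
  induction m generalizing k with
  | zero =>
    cases k with
    | zero => omega
    | succ k => simp [casW]
  | succ m ih =>
    cases k with
    | zero => omega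
    | succ k => simp [casW, ih (k + 1) (by omega), ih k (by omega)]

lemma tri_succ (k : ℕ) : (k + 1) * (k + 1 - 1) / 2 = k * (k - 1) / 2 + k :=
  Nat.triangle_succ k

lemma casW_eq (p q t : ℝ) (hp : 0 < p) (hq : 0 < q) (m k : ℕ) (h : k ≤ m) :
    casW (q / p) t m k = pqBernstein p q m k t := by
  induction m generalizing k with
  | zero =>
    obtain rfl : k = 0 := by omega
    simp [casW, pqBernstein, pqBinom, pqFact]
  | succ m ih =>
    have hF : ∀ n, pqFact p q n ≠ 0 := fun n => (pqFact_pos p q hp hq n).ne'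
    have hI : ∀ n, pqInt p q (n + 1) ≠ 0 := fun n => (pqInt_pos p q hp hq n).ne'
    cases k with
    | zero =>
      rw [casW, ih 0 (by omega)]
      unfold pqBernstein pqBinom
      rw [tri_succ]
      simp only [Nat.sub_zero, Finset.prod_range_succ, pow_add, div_pow]
      have h1 := hF m
      have h2 := hF (m + 1)
      have h3 := hF 0
      generalize (∏ s ∈ Finset.range m, (p ^ s - q ^ s * t)) = Q
      field_simp
    | succ k =>
      rcases Nat.lt_or_ge k m with hk | hk
      · obtain ⟨d, rfl⟩ : ∃ d, m = k + 1 + d := ⟨m - (k + 1), by omega⟩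
        rw [casW, ih (k + 1) (by omega), ih k (by omega)]
        have e1 : k + 1 + d - (k + 1) = d := by omega
        have e2 : k + 1 + d - k = d + 1 := by omega
        have e3 : k + 1 + d + 1 - (k + 1) = d + 1 := by omega
        have e4 : pqInt p q (k + 1 + d + 1)
            = p ^ (k + 1) * pqInt p q (d + 1) + q ^ (d + 1) * pqInt p q (k + 1) := by
          rw [← pqInt_add]; congr 1; omega
        unfold pqBernstein pqBinom
        rw [tri_succ (k + 1 + d), tri_succ k, e1, e2, e3]
        simp only [pqFact, e4, Finset.prod_range_succ, div_pow]
        generalize (∏ s ∈ Finset.range d, (p ^ s - q ^ s * t)) = Q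
        generalize (k + 1 + d) * (k + 1 + d - 1) / 2 = T
        generalize k * (k - 1) / 2 = T'
        have h1 := hF k
        have h2 := hF d
        have h3 := hI k
        have h4 := hI d
        generalize pqInt p q (k + 1) = A at *
        generalize pqInt p q (d + 1) = B at *
        generalize pqFact p q (k + 1 + d) = F at *
        field_simp
        ring
      · obtain rfl : k = m := by omega
        rw [casW, ih k (by omega), casW_zero _ _ _ _ (Nat.lt_succ_self k)]
        unfold pqBernstein pqBinom
        rw [tri_succ]
        simp only [Nat.sub_self]
        have h1 := hF k
        have h2 := hF (k + 1)
        have h3 := hF 0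
        field_simp
        simp
        ring

/-- Intermediate de Casteljau arguments. -/
noncomputable def casArg (p q t : ℝ) (n m k : ℕ) : Fin n → ℝ := fun i =>
  if (i : ℕ) < k then p ^ (n - 1 - (i : ℕ)) * q ^ (i : ℕ)
  else if (i : ℕ) < m then 0 else p ^ (n - 1 - (i : ℕ)) * q ^ (i : ℕ) * t

lemma casArg_step (p q t : ℝ) (hp : 0 < p) (n m k : ℕ) (hk : k ≤ m) (hm : m < n)
    (hq : 0 < q) (s : (Fin n → ℝ) → ℝ) (hsym : IsSymmetricFn n s) (haff : IsMultiaffine n s) :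
    s (casArg p q t n m k) = (1 - (q / p) ^ (m - k) * t) * s (casArg p q t n (m + 1) k)
      + (q / p) ^ (m - k) * t * s (casArg p q t n (m + 1) (k + 1)) := by
  obtain ⟨a, b, hab⟩ := haff ⟨m, hm⟩ (casArg p q t n m k)
  have e1 : s (casArg p q t n m k) = a * (p ^ (n - 1 - m) * q ^ m * t) + b := by
    rw [← hab]
    congr 1
    symm
    rw [Function.update_eq_self_iff]
    simp [casArg, Nat.not_lt.2 hk]
  have e2 : s (casArg p q t n (m + 1) k) = a * 0 + b := by
    rw [← hab]
    congr 1
    funext i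
    by_cases hi : i = ⟨m, hm⟩
    · subst hi
      simp [casArg, Nat.not_lt.2 hk]
    · have hi' : (i : ℕ) ≠ m := fun h => hi (Fin.ext h)
      rw [Function.update_of_ne hi]
      have : (i : ℕ) < m + 1 ↔ (i : ℕ) < m := by omega
      simp only [casArg, this]
  have e3 : s (casArg p q t n (m + 1) (k + 1)) = a * (p ^ (n - 1 - k) * q ^ k) + b := by
    rw [← hab, ← hsym (Equiv.swap ⟨k, by omega⟩ ⟨m, hm⟩)]
    congr 1
    funext i
    by_cases hi : i = ⟨m, hm⟩
    · subst hi
      simp [casArg]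
    · have hi' : (i : ℕ) ≠ m := fun h => hi (Fin.ext h)
      rw [Function.update_of_ne hi]
      by_cases hik : i = ⟨k, by omega⟩
      · subst hik
        have h1 : k < m := by simp at hi'; omega
        have h2 : ¬ (m < k + 1) := by omega
        simp [casArg, h1, h2]
      · have hik' : (i : ℕ) ≠ k := fun h => hik (Fin.ext h)
        rw [Equiv.swap_apply_of_ne_of_ne hik hi]
        have h1 : (i : ℕ) < m + 1 ↔ (i : ℕ) < m := by omega
        have h2 : (i : ℕ) < k + 1 ↔ (i : ℕ) < k := by omega
        simp only [casArg, h1, h2]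
  rw [e1, e2, e3]
  obtain ⟨d, rfl⟩ : ∃ d, m = k + d := ⟨m - k, by omega⟩
  have e4 : n - 1 - k = (n - 1 - (k + d)) + d := by omega
  rw [e4, Nat.add_sub_cancel_left, div_pow, pow_add, pow_add]
  field_simp
  ring

lemma casArg_sum (p q t : ℝ) (hp : 0 < p) (n m : ℕ) (hm : m ≤ n)
    (hq : 0 < q) (s : (Fin n → ℝ) → ℝ) (hsym : IsSymmetricFn n s) (haff : IsMultiaffine n s) :
    s (fun i => p ^ (n - 1 - (i : ℕ)) * q ^ (i : ℕ) * t) =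
      ∑ k ∈ Finset.range (m + 1), casW (q / p) t m k * s (casArg p q t n m k) := by
  induction m with
  | zero => simp [casW]; rfl
  | succ m ih =>
    rw [ih (by omega)]
    rw [Finset.sum_range_succ' _ (m + 1)]
    have h1 : ∀ k ∈ Finset.range (m + 1), casW (q / p) t m k * s (casArg p q t n m k)
        = casW (q / p) t m k * (1 - (q / p) ^ (m - k) * t) * s (casArg p q t n (m + 1) k)
        + casW (q / p) t m k * ((q / p) ^ (m - k) * t) *
            s (casArg p q t n (m + 1) (k + 1)) := by
      intro k hk
      have hk := Finset.mem_range.1 hk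
      rw [casArg_step p q t hp n m k (by omega) (by omega) hq s hsym haff]
      ring
    rw [Finset.sum_congr rfl h1, Finset.sum_add_distrib]
    have h2 := Finset.sum_range_succ (fun k => casW (q / p) t m k *
      (1 - (q / p) ^ (m - k) * t) * s (casArg p q t n (m + 1) k)) (m + 1)
    rw [casW_zero _ _ m (m + 1) (Nat.lt_succ_self m), zero_mul, zero_mul, add_zero] at h2
    rw [← h2, Finset.sum_range_succ']
    simp only [casW, add_mul, Finset.sum_add_distrib, Nat.sub_zero]
    ring

/-- Rotation putting the zeros first. -/
def rotPerm (n k : ℕ) (hk : k ≤ n) : Equiv.Perm (Fin n) where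
  toFun i := if h : (i : ℕ) < n - k then ⟨i + k, by omega⟩ else ⟨i - (n - k), by omega⟩
  invFun i := if h : (i : ℕ) < k then ⟨i + (n - k), by omega⟩ else ⟨i - k, by omega⟩
  left_inv i := by
    have hi := i.2
    apply Fin.ext
    by_cases h : (i : ℕ) < n - k
    · have h1 : ¬ ((i : ℕ) + k < k) := by omega
      simp [h]
    · have h1 : (i : ℕ) - (n - k) < k := by omega
      simp only [h, h1, dite_true, dite_false]
      omega
  right_inv i := by
    have hi := i.2
    apply Fin.ext
    by_cases h : (i : ℕ) < k
    · have h1 : ¬ ((i : ℕ) + (n - k) < (n - k)) := by omega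
      simp [h]
    · have h1 : (i : ℕ) - (k) < (n - k) := by omega
      simp only [h, h1, dite_true, dite_false]
      omega

/-- every polynomial of degree at most `n` is a (p,q)-Bézier curve whose
control points are the (p,q)-blossom values
`P_k = s(0, …, 0, p^{n-1}, p^{n-2}q, …, p^{n-k}q^{k-1})` (first `n-k` arguments zero). -/
theorem pq_polynomial_is_bezier (n : ℕ) (hn : 1 ≤ n)
    (p q : ℝ) (h0 : 0 < q) (hqp : q < p)
    (S : Polynomial ℝ) (hS : S.natDegree ≤ n)
    (s : (Fin n → ℝ) → ℝ)
    (hsym : IsSymmetricFn n s) (haff : IsMultiaffine n s)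
    (hdiag : ∀ t : ℝ, s (fun i => p ^ (n - 1 - (i : ℕ)) * q ^ (i : ℕ) * t) = S.eval t) :
    ∀ t : ℝ, S.eval t = ∑ k ∈ Finset.range (n + 1),
      s (fun i : Fin n => if (i : ℕ) < n - k then 0
          else p ^ (n - 1 - ((i : ℕ) - (n - k))) * q ^ ((i : ℕ) - (n - k))) *
        pqBernstein p q n k t := by
  intro t
  have hp : 0 < p := h0.trans hqp
  rw [← hdiag, casArg_sum p q t hp n n le_rfl h0 s hsym haff]
  apply Finset.sum_congr rfl
  intro k hk
  have hk : k ≤ n := Nat.lt_succ_iff.1 (Finset.mem_range.1 hk)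
  rw [casW_eq p q t hp h0 n k hk, mul_comm, ← hsym (rotPerm n k hk)]
  congr 2
  funext i
  have hi := i.2
  by_cases h : (i : ℕ) < n - k
  · have h1 : (i : ℕ) + k < n := by omega
    simp [casArg, rotPerm, h, h1]
  · have h1 : (i : ℕ) - (n - k) < k := by omega
    simp [casArg, rotPerm, h, h1]
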